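/- For every a > 0 there exists exactly one function f ∈ C¹([0,∞)) such that the map r ↦ |f'(r)|^{p-2}f'(r) is also C¹ on [0,∞), f(0) = a, f'(0) = 0, and f satisfies (|f'|^{p-2}f')'(r) + ((N-1)/r)(|f'|^{p-2}f')(r) + f(r) - |f'(r)|^{p-1} = 0 for all r > 0; in particular the solution is defined globally on [0,∞). -/

import Mathlib

/-!
With `G = |f'|^{p-2} f'` and `s = 1 / (p - 1) > 1`, the profile equation is the first-order system
`f' = |G|^{s-1} G`, `G' = |G| - f - ((N-1)/r) G`, `f(0) = a`, `G(0) = 0`. Since `s > 1`, its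
right-hand side is locally Lipschitz in `(f, G)`; only the factor `1/r` is singular, and it
multiplies a damping term.

Uniqueness (`system_unique`): for two solutions the damping term contributes nonpositively to the
derivative of `(G₁ - G₂)² + (f₁ - f₂)²`, so this quantity satisfies a Gronwall inequality on
compact intervals and vanishes.

Existence (`system_exists`): `G` is sought as a solution of
`G(r) = r^{-(N-1)} ∫₀^r s^{N-1} (|G| - f) ds = r ∫₀¹ t^{N-1} (|G| - f)(rt) dt`,
whose last form is regular at `r = 0` (`avg_deriv`). The energy
`E = |G|^{s+1}/(s+1) + f²/2` satisfies `E' ≤ (s+1) E` (`energy_bound`), so a solution stays below an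
explicit threshold `M(r) = c e^r`. If `G` is truncated at height `M(r)` inside `|G|^{s-1} G`, the
nonlinearity becomes Lipschitz in `G` with a constant depending continuously on `r`, and the
integral equation is solved on all of `[0, ∞)` by the contraction principle in a weighted sup norm
(`volterra_exists`). The energy estimate up to a first time at which `|G|` reaches `M` shows that
there is no such time, so the truncation is never active.
-/

open Real Set Filter MeasureTheory

/-- `f` is a solution of the profile equation with parameter `a`:
`f` is C¹ on `[0,∞)` with derivative `f'`, the map `r ↦ |f'(r)|^{p-2} f'(r)` is C¹ on `[0,∞)`
with derivative `F'`, the ODE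
`(|f'|^{p-2}f')'(r) + ((N-1)/r)(|f'|^{p-2}f')(r) + f(r) - |f'(r)|^{p-1} = 0` holds for `r > 0`,
and `f 0 = a`, `f' 0 = 0`. -/
def IsProfileSol (N : ℕ) (p a : ℝ) (f f' F' : ℝ → ℝ) : Prop :=
  (∀ r ∈ Ici (0:ℝ), HasDerivWithinAt f (f' r) (Ici 0) r) ∧
  ContinuousOn f' (Ici 0) ∧
  (∀ r ∈ Ici (0:ℝ), HasDerivWithinAt (fun s => |f' s| ^ (p - 2) * f' s) (F' r) (Ici 0) r) ∧
  ContinuousOn F' (Ici 0) ∧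
  (∀ r, 0 < r →
    F' r + (((N : ℝ) - 1) / r) * (|f' r| ^ (p - 2) * f' r) + f r - |f' r| ^ (p - 1) = 0) ∧
  f 0 = a ∧ f' 0 = 0

/-- `g(r;a) = -|f'(r;a)|^{p-2} f'(r;a)`. -/
noncomputable def gFun (p : ℝ) (f' : ℝ → ℝ) (r : ℝ) : ℝ := -(|f' r| ^ (p - 2) * f' r)

/-- `ρ(r) = r^{N-1} e^r`. -/
noncomputable def rho (N : ℕ) (r : ℝ) : ℝ := r ^ (N - 1) * Real.exp r

/-- the derivative of `ρ`. -/
noncomputable def rho' (N : ℕ) (r : ℝ) : ℝ :=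
  (((N : ℝ) - 1) * r ^ (N - 2) + r ^ (N - 1)) * Real.exp r

/-- `w(r;a) = ρ(r) g(r;a)`. -/
noncomputable def wFun (N : ℕ) (p : ℝ) (f' : ℝ → ℝ) (r : ℝ) : ℝ := rho N r * gFun p f' r

/-- the derivative `w'(r;a) = ρ'(r) g(r;a) + ρ(r) g'(r;a)`, where `g' = -F'`. -/
noncomputable def wDeriv (N : ℕ) (p : ℝ) (f' F' : ℝ → ℝ) (r : ℝ) : ℝ :=
  rho' N r * gFun p f' r - rho N r * F' r

/-! ### The averaging operator -/

/-- The averaging operator `A[F](r) = ∫₀¹ t^k F(rt) dt`. For `k = N - 1` and `r > 0` one has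
`r A[F](r) = r^{-(N-1)} ∫₀^r s^{N-1} F(s) ds`, but this form makes sense at `r = 0`. -/
noncomputable def avg (k : ℕ) (F : ℝ → ℝ) (r : ℝ) : ℝ := ∫ t in (0:ℝ)..1, t ^ k * F (r * t)

lemma avg_continuous (k : ℕ) {F : ℝ → ℝ} (hF : Continuous F) : Continuous (avg k F) := by
  unfold avg
  apply intervalIntegral.continuous_parametric_intervalIntegral_of_continuous'
  fun_prop

lemma avg_zero (k : ℕ) (F : ℝ → ℝ) : avg k F 0 = F 0 / (k + 1) := by
  simp [avg, integral_pow, div_eq_inv_mul]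

lemma avg_eq (k : ℕ) (F : ℝ → ℝ) {r : ℝ} (hr : 0 < r) :
    r * avg k F r = (∫ s in (0:ℝ)..r, s ^ k * F s) / r ^ k := by
  have h := intervalIntegral.mul_integral_comp_mul_left (a := 0) (b := 1)
    (f := fun s => s ^ k * F s) r
  simp only [mul_zero, mul_one] at h
  rw [← h, avg, eq_div_iff (by positivity), mul_assoc]
  congr 1
  rw [mul_comm, ← intervalIntegral.integral_const_mul]
  congr 1
  ext t
  ring

/-- `G(r) = r A[F](r)` solves `G' + (k/r) G = F` together with `G(0) = 0`, with the derivative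
written in a form that is continuous up to `r = 0`. -/
lemma avg_deriv (k : ℕ) {F : ℝ → ℝ} (hF : Continuous F) {r : ℝ} (hr : 0 ≤ r) :
    HasDerivWithinAt (fun r => r * avg k F r) (F r - k * avg k F r) (Ici 0) r := by
  rcases hr.eq_or_lt with rfl | hr
  · have h0 : F 0 - k * avg k F 0 = avg k F 0 := by
      rw [avg_zero]; field_simp; ring
    rw [h0]
    apply HasDerivAt.hasDerivWithinAt
    rw [hasDerivAt_iff_tendsto_slope]
    refine Tendsto.congr' ?_
      (((avg_continuous k hF).tendsto 0).mono_left nhdsWithin_le_nhds)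
    filter_upwards [self_mem_nhdsWithin] with x hx
    have hx : x ≠ 0 := hx
    simp [slope_def_field, hx]
  · apply HasDerivAt.hasDerivWithinAt
    have h1 : HasDerivAt (fun r => ∫ s in (0:ℝ)..r, s ^ k * F s) (r ^ k * F r) r :=
      (Continuous.integral_hasStrictDerivAt (f := fun s => s ^ k * F s) (by fun_prop)
        0 r).hasDerivAt
    have h2 := h1.div (hasDerivAt_pow k r) (by positivity)
    have h3 : (fun r => r * avg k F r) =ᶠ[nhds r]
        (fun r => (∫ s in (0:ℝ)..r, s ^ k * F s) / r ^ k) := by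
      filter_upwards [lt_mem_nhds hr] with x hx using avg_eq k F hx
    refine (h2.congr_of_eventuallyEq h3).congr_deriv ?_
    have h4 := avg_eq k F hr
    rw [eq_div_iff (by positivity)] at h4
    rw [← h4]
    rcases k with _ | k
    · simp
    · field_simp
      simp
      ring

/-! ### The integral equation -/

/-- Contraction estimate for the Volterra operator `G ↦ r A[|G| - f_G]`, where
`f_G(r) = a + ∫₀^r ψ(s, G(s)) ds`, in the norm weighted by `W`. The growth condition
`2 (1 + L) W ≤ W'` makes the factor `3/4`. -/
lemma volterra_est (k : ℕ) (a : ℝ) (ψ : ℝ → ℝ → ℝ) (hψ : Continuous (fun x : ℝ × ℝ => ψ x.1 x.2))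
    (L W W' : ℝ → ℝ) (hL0 : ∀ t, 0 ≤ L t)
    (hLip : ∀ t x y, |ψ t x - ψ t y| ≤ L t * |x - y|)
    (hW : ∀ t, HasDerivAt W (W' t) t) (hW'c : Continuous W') (hWp : ∀ t, 0 < W t)
    (hWW : ∀ t, 2 * (1 + L t) * W t ≤ W' t)
    (G H : ℝ → ℝ) (hG : Continuous G) (hH : Continuous H) (d : ℝ) (hd : 0 ≤ d)
    (hGH : ∀ s, 0 ≤ s → |G s - H s| ≤ d * W s) (r : ℝ) (hr : 0 ≤ r) :
    |r * avg k (fun s => |G s| - (a + ∫ t in (0:ℝ)..s, ψ t (G t))) r -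
      r * avg k (fun s => |H s| - (a + ∫ t in (0:ℝ)..s, ψ t (H t))) r| ≤ 3 / 4 * d * W r := by
  have hWc : Continuous W := continuous_iff_continuousAt.2 fun t => (hW t).continuousAt
  have hψc : ∀ K : ℝ → ℝ, Continuous K → Continuous (fun t => ψ t (K t)) := fun K hK =>
    hψ.comp (continuous_id.prodMk hK)
  have hWint : ∀ s, ∫ t in (0:ℝ)..s, W' t = W s - W 0 := fun s =>
    intervalIntegral.integral_eq_sub_of_hasDerivAt (fun t _ => hW t)
      (hW'c.intervalIntegrable _ _)
  have h1 : ∀ s, 0 ≤ s →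
      |(∫ t in (0:ℝ)..s, ψ t (G t)) - ∫ t in (0:ℝ)..s, ψ t (H t)| ≤ d / 2 * W s := by
    intro s hs
    rw [← intervalIntegral.integral_sub ((hψc G hG).intervalIntegrable _ _)
      ((hψc H hH).intervalIntegrable _ _)]
    calc _ ≤ ∫ t in (0:ℝ)..s, d / 2 * W' t := by
          rw [← Real.norm_eq_abs]
          refine intervalIntegral.norm_integral_le_of_norm_le hs ?_
            (Continuous.intervalIntegrable (by fun_prop) _ _)
          refine Eventually.of_forall fun t ht => ?_
          have e1 := mul_le_mul_of_nonneg_left (hGH t ht.1.le) (hL0 t)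
          have e2 := mul_le_mul_of_nonneg_left (hWW t) hd
          have e3 := mul_nonneg hd (hWp t).le
          have e4 := hLip t (G t) (H t)
          rw [Real.norm_eq_abs]
          nlinarith
      _ ≤ d / 2 * W s := by
          rw [intervalIntegral.integral_const_mul, hWint]
          have := mul_nonneg hd (hWp 0).le
          nlinarith
  set FG : ℝ → ℝ := fun s => |G s| - (a + ∫ t in (0:ℝ)..s, ψ t (G t)) with hFG
  set FH : ℝ → ℝ := fun s => |H s| - (a + ∫ t in (0:ℝ)..s, ψ t (H t)) with hFH
  have hFc : ∀ K : ℝ → ℝ, Continuous K →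
      Continuous (fun s => |K s| - (a + ∫ t in (0:ℝ)..s, ψ t (K t))) := fun K hK =>
    hK.abs.sub (continuous_const.add (intervalIntegral.continuous_primitive
      (fun a b => (hψc K hK).intervalIntegrable a b) 0))
  have hFGc : Continuous FG := hFc G hG
  have hFHc : Continuous FH := hFc H hH
  have h2 : ∀ s, 0 ≤ s → |FG s - FH s| ≤ 3 / 2 * d * W s := by
    intro s hs
    have e1 := abs_abs_sub_abs_le_abs_sub (G s) (H s)
    have e2 := hGH s hs
    have e3 := h1 s hs
    simp only [hFG, hFH]
    rw [abs_le] at e1 e3 ⊢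
    constructor <;> linarith [e1.1, e1.2, e3.1, e3.2]
  rw [← mul_sub, abs_mul, abs_of_nonneg hr]
  have h3 : avg k FG r - avg k FH r = ∫ t in (0:ℝ)..1, t ^ k * (FG (r * t) - FH (r * t)) := by
    unfold avg
    have e : ∀ F : ℝ → ℝ, Continuous F →
        IntervalIntegrable (fun t => t ^ k * F (r * t)) volume 0 1 := fun F hF =>
      Continuous.intervalIntegrable (by fun_prop) _ _
    rw [← intervalIntegral.integral_sub (e _ hFGc) (e _ hFHc)]
    simp only [mul_sub]
  rw [h3]
  have h4 : |∫ t in (0:ℝ)..1, t ^ k * (FG (r * t) - FH (r * t))| ≤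
      ∫ t in (0:ℝ)..1, 3 / 4 * d * W' (r * t) := by
    rw [← Real.norm_eq_abs]
    refine intervalIntegral.norm_integral_le_of_norm_le zero_le_one ?_
      (Continuous.intervalIntegrable (by fun_prop) _ _)
    refine Eventually.of_forall fun t ht => ?_
    have ht0 : 0 ≤ t := ht.1.le
    have e1 := h2 (r * t) (by positivity)
    have e2 : t ^ k ≤ 1 := pow_le_one₀ ht0 ht.2
    have e3 := mul_le_mul_of_nonneg_left (hWW (r * t)) hd
    have e4 := mul_nonneg (mul_nonneg hd (hL0 (r * t))) (hWp (r * t)).le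
    rw [norm_mul, Real.norm_eq_abs, Real.norm_eq_abs, abs_of_nonneg (pow_nonneg ht0 k)]
    have e5 : t ^ k * |FG (r * t) - FH (r * t)| ≤ 1 * |FG (r * t) - FH (r * t)| :=
      mul_le_mul_of_nonneg_right e2 (abs_nonneg _)
    nlinarith
  calc _ ≤ r * ∫ t in (0:ℝ)..1, 3 / 4 * d * W' (r * t) := mul_le_mul_of_nonneg_left h4 hr
    _ = ∫ s in (0:ℝ)..r, 3 / 4 * d * W' s := by
      have h := intervalIntegral.mul_integral_comp_mul_left (a := 0) (b := 1)
        (f := fun s => 3 / 4 * d * W' s) r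
      simpa using h
    _ ≤ 3 / 4 * d * W r := by
      rw [intervalIntegral.integral_const_mul, hWint]
      have := mul_nonneg hd (hWp 0).le
      nlinarith

/-- Global solvability of the integral equation `G = r A[|G| - f_G]`,
`f_G(r) = a + ∫₀^r ψ(s, G(s)) ds`, when `ψ(t, ·)` is Lipschitz with a constant `L(t)` that is
finite for each `t` but may grow with `t`. -/
lemma volterra_exists (k : ℕ) (a : ℝ) (ψ : ℝ → ℝ → ℝ)
    (hψ : Continuous (fun x : ℝ × ℝ => ψ x.1 x.2)) (hψ0 : ∀ t, ψ t 0 = 0)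
    (L : ℝ → ℝ) (hL0 : ∀ t, 0 ≤ L t) (hLc : Continuous L)
    (hLip : ∀ t x y, |ψ t x - ψ t y| ≤ L t * |x - y|) :
    ∃ G : ℝ → ℝ, Continuous G ∧ ∀ r, 0 ≤ r →
      G r = r * avg k (fun s => |G s| - (a + ∫ t in (0:ℝ)..s, ψ t (G t))) r := by
  set W : ℝ → ℝ := fun r => Real.exp (∫ t in (0:ℝ)..r, 2 * (1 + L t)) with hWdef
  have hW : ∀ t, HasDerivAt W (W t * (2 * (1 + L t))) t := fun t =>
    (Continuous.integral_hasStrictDerivAt (f := fun t => 2 * (1 + L t)) (by fun_prop)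
      0 t).hasDerivAt.exp
  have hWc : Continuous W := continuous_iff_continuousAt.2 fun t => (hW t).continuousAt
  have hWp : ∀ t, 0 < W t := fun t => Real.exp_pos _
  have hWr : ∀ r, 0 ≤ r → r ≤ W r := by
    intro r hr
    have h1 : ∫ t in (0:ℝ)..r, (1:ℝ) ≤ ∫ t in (0:ℝ)..r, 2 * (1 + L t) :=
      intervalIntegral.integral_mono_on hr (by simp)
        (Continuous.intervalIntegrable (by fun_prop) _ _) (fun t _ => by linarith [hL0 t])
    have h2 := Real.add_one_le_exp (∫ t in (0:ℝ)..r, 2 * (1 + L t))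
    simp at h1
    simp only [hWdef]
    simp at h2 ⊢
    linarith
  let K : (ℝ → ℝ) → ℝ → ℝ := fun G r =>
    r * avg k (fun s => |G s| - (a + ∫ t in (0:ℝ)..s, ψ t (G t))) r
  have hKc : ∀ G : ℝ → ℝ, Continuous G → Continuous (K G) := fun G hG =>
    continuous_id.mul (avg_continuous k (hG.abs.sub (continuous_const.add
      (intervalIntegral.continuous_primitive
      (fun a b => (hψ.comp (continuous_id.prodMk hG)).intervalIntegrable a b) 0))))
  have hKest : ∀ G H : ℝ → ℝ, Continuous G → Continuous H → ∀ d, 0 ≤ d →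
      (∀ s, 0 ≤ s → |G s - H s| ≤ d * W s) → ∀ r, 0 ≤ r →
      |K G r - K H r| ≤ 3 / 4 * d * W r := fun G H hG hH d hd h r hr =>
    volterra_est k a ψ hψ L W _ hL0 hLip hW (by fun_prop) hWp
      (fun t => le_of_eq (by ring)) G H hG hH d hd h r hr
  have hK0 : ∀ r, 0 ≤ r → |K 0 r| ≤ |a| * W r := by
    intro r hr
    have : K 0 r = - (r * (a / (k + 1))) := by
      simp only [K, hψ0, avg, Pi.zero_apply, abs_zero, intervalIntegral.integral_zero,
        intervalIntegral.integral_mul_const, integral_pow]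
      simp
      left
      ring
    rw [this, abs_neg, abs_mul, abs_div, abs_of_nonneg hr,
      abs_of_nonneg (by positivity : (0:ℝ) ≤ k + 1)]
    have e1 : |a| / ((k:ℝ) + 1) ≤ |a| := div_le_self (abs_nonneg a) (by
      have : (0:ℝ) ≤ k := Nat.cast_nonneg k
      linarith)
    have e2 := hWr r hr
    calc r * (|a| / (k + 1)) ≤ W r * |a| := mul_le_mul e2 e1 (by positivity) (hWp r).le
      _ = _ := mul_comm _ _
  -- The unknown is rescaled to `u = G / W`, so that the weighted norm becomes the sup norm.
  have hsc : ∀ u : BoundedContinuousFunction ℝ ℝ, Continuous (fun s => W s * u s) := fun u =>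
    hWc.mul u.continuous
  have hbd : ∀ u : BoundedContinuousFunction ℝ ℝ, ∀ r : ℝ,
      ‖K (fun s => W s * u s) (max r 0) / W (max r 0)‖ ≤ 3 / 4 * ‖u‖ + |a| := by
    intro u r
    have hr : 0 ≤ max r 0 := le_max_right _ _
    rw [Real.norm_eq_abs, abs_div, abs_of_pos (hWp _), div_le_iff₀ (hWp _)]
    have e1 := hKest (fun s => W s * u s) 0 (hsc u) continuous_const ‖u‖ (norm_nonneg _)
      (fun s _ => by
        simp only [Pi.zero_apply, sub_zero]
        rw [abs_mul, abs_of_pos (hWp s), mul_comm]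
        exact mul_le_mul_of_nonneg_right (u.norm_coe_le_norm s) (hWp s).le) _ hr
    have e2 := hK0 _ hr
    have e3 := abs_sub_abs_le_abs_sub (K (fun s => W s * u s) (max r 0)) (K 0 (max r 0))
    linarith
  let T : BoundedContinuousFunction ℝ ℝ → BoundedContinuousFunction ℝ ℝ := fun u =>
    BoundedContinuousFunction.ofNormedAddCommGroup
      (fun r => K (fun s => W s * u s) (max r 0) / W (max r 0))
      (((hKc _ (hsc u)).comp (continuous_id.max continuous_const)).div
        (hWc.comp (continuous_id.max continuous_const)) (fun r => (hWp _).ne'))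
      (3 / 4 * ‖u‖ + |a|) (hbd u)
  have hT : ContractingWith (3 / 4) T := by
    refine ⟨by
      rw [← NNReal.coe_lt_coe]; norm_num, LipschitzWith.of_dist_le_mul fun u v => ?_⟩
    rw [BoundedContinuousFunction.dist_le (by positivity)]
    intro r
    have hr : 0 ≤ max r 0 := le_max_right _ _
    have e1 := hKest (fun s => W s * u s) (fun s => W s * v s) (hsc u) (hsc v) (dist u v)
      dist_nonneg (fun s _ => by
        rw [← mul_sub, abs_mul, abs_of_pos (hWp s), mul_comm]
        exact mul_le_mul_of_nonneg_right (BoundedContinuousFunction.dist_coe_le_dist (f := u) (g := v) s)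
          (hWp s).le) _ hr
    change |K (fun s => W s * u s) (max r 0) / W (max r 0) -
      K (fun s => W s * v s) (max r 0) / W (max r 0)| ≤ _
    rw [← sub_div, abs_div, abs_of_pos (hWp _), div_le_iff₀ (hWp _)]
    push_cast
    exact e1
  set u := hT.fixedPoint with hu
  have hfix : T u = u := hT.fixedPoint_isFixedPt
  refine ⟨fun s => W s * u s, hsc u, fun r hr => ?_⟩
  have h1 : u r = K (fun s => W s * u s) (max r 0) / W (max r 0) := by
    conv_lhs => rw [← hfix]
    rfl
  rw [max_eq_left hr] at h1
  change W r * u r = K (fun s => W s * u s) r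
  rw [mul_comm, h1]
  exact div_mul_cancel₀ _ (hWp r).ne'

/-! ### Signed powers and truncation -/

/-- The signed power `|x|^{s-1} x`. The map `|f'|^{p-2} f'` is `spow (p - 1) f'`, and its inverse
is `spow (1 / (p - 1))`, whose exponent exceeds `1`. -/
noncomputable def spow (s x : ℝ) : ℝ := |x| ^ (s - 1) * x

lemma spow_eq {s : ℝ} (hs : 0 < s) (x : ℝ) : spow s x = max x 0 ^ s - max (-x) 0 ^ s := by
  have key : ∀ y : ℝ, 0 < y → y ^ (s - 1) * y = y ^ s := fun y hy => by
    rw [← Real.rpow_add_one hy.ne', sub_add_cancel]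
  rcases lt_trichotomy x 0 with h | rfl | h
  · have := key (-x) (by linarith)
    rw [spow, abs_of_neg h, max_eq_right h.le, max_eq_left (by linarith), Real.zero_rpow hs.ne']
    linarith
  · simp [spow]
  · rw [spow, abs_of_pos h, max_eq_left h.le, max_eq_right (by linarith), Real.zero_rpow hs.ne',
      key x h, sub_zero]

lemma spow_zero (s : ℝ) : spow s 0 = 0 := by simp [spow]

lemma spow_continuous {s : ℝ} (hs : 0 < s) : Continuous (spow s) := by
  have : spow s = fun x => max x 0 ^ s - max (-x) 0 ^ s := funext (spow_eq hs)
  rw [this]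
  exact ((continuous_id.max continuous_const).rpow_const fun _ => Or.inr hs.le).sub
    ((continuous_neg.max continuous_const).rpow_const fun _ => Or.inr hs.le)

lemma abs_spow {s : ℝ} (hs : 0 < s) (x : ℝ) : |spow s x| = |x| ^ s := by
  rcases eq_or_ne x 0 with rfl | h
  · simp [spow, Real.zero_rpow hs.ne']
  · rw [spow, abs_mul, abs_of_nonneg (Real.rpow_nonneg (abs_nonneg x) _),
      ← Real.rpow_add_one (abs_pos.2 h).ne', sub_add_cancel]

lemma spow_spow {s t : ℝ} (hs : 0 < s) (hst : s * t = 1) (x : ℝ) : spow t (spow s x) = x := by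
  rcases eq_or_ne x 0 with rfl | h
  · simp [spow]
  · have hx := abs_pos.2 h
    rw [spow, abs_spow hs, ← Real.rpow_mul hx.le, spow, ← mul_assoc, ← Real.rpow_add hx]
    have : s * (t - 1) + (s - 1) = 0 := by linarith
    rw [this, Real.rpow_zero, one_mul]

/-- Lipschitz bound for `u ↦ u^s` on `[0, M]`, by the mean value inequality. -/
lemma rpow_lip {s M u v : ℝ} (hs : 1 ≤ s) (hu : u ∈ Icc 0 M) (hv : v ∈ Icc 0 M) :
    |u ^ s - v ^ s| ≤ s * M ^ (s - 1) * |u - v| := by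
  refine Convex.norm_image_sub_le_of_norm_hasDerivWithin_le (f := fun x : ℝ => x ^ s)
    (f' := fun x => s * x ^ (s - 1)) (s := Icc 0 M) (fun x _ =>
    (Real.hasDerivAt_rpow_const (Or.inr hs)).hasDerivWithinAt) (fun x hx => ?_)
    (convex_Icc 0 M) hv hu
  rw [Real.norm_eq_abs, abs_of_nonneg (mul_nonneg (by linarith) (Real.rpow_nonneg hx.1 _))]
  exact mul_le_mul_of_nonneg_left (Real.rpow_le_rpow hx.1 hx.2 (by linarith)) (by linarith)

lemma spow_lip {s M x y : ℝ} (hs : 1 ≤ s) (hx : |x| ≤ M) (hy : |y| ≤ M) :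
    |spow s x - spow s y| ≤ 2 * s * M ^ (s - 1) * |x - y| := by
  have hM : 0 ≤ M := (abs_nonneg x).trans hx
  rw [abs_le] at hx hy
  rw [spow_eq (by linarith), spow_eq (by linarith)]
  have h1 := rpow_lip hs (M := M) (u := max x 0) (v := max y 0)
    ⟨le_max_right _ _, max_le hx.2 hM⟩ ⟨le_max_right _ _, max_le hy.2 hM⟩
  have h2 := rpow_lip hs (M := M) (u := max (-x) 0) (v := max (-y) 0)
    ⟨le_max_right _ _, max_le (by linarith) hM⟩ ⟨le_max_right _ _, max_le (by linarith) hM⟩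
  have h3 : |max x 0 - max y 0| ≤ |x - y| := abs_max_sub_max_le_abs x y 0
  have h4 : |max (-x) 0 - max (-y) 0| ≤ |x - y| := by
    have := abs_max_sub_max_le_abs (-x) (-y) 0
    rwa [neg_sub_neg, abs_sub_comm y x] at this
  have hC : 0 ≤ s * M ^ (s - 1) := mul_nonneg (by linarith) (Real.rpow_nonneg hM _)
  have h5 := mul_le_mul_of_nonneg_left h3 hC
  have h6 := mul_le_mul_of_nonneg_left h4 hC
  rw [abs_le] at h1 h2 ⊢
  constructor <;> linarith [h1.1, h1.2, h2.1, h2.2]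

/-- `|x|^{s+1} / (s+1)` is a primitive of the signed power, hence the kinetic part of the
energy. -/
lemma hasDerivAt_energy {s : ℝ} (hs : 1 < s) (x : ℝ) :
    HasDerivAt (fun x : ℝ => |x| ^ (s + 1) / (s + 1)) (spow s x) x := by
  have h := (hasDerivAt_abs_rpow x (show 1 < s + 1 by linarith)).div_const (s + 1)
  refine h.congr_deriv ?_
  have : s + 1 - 2 = s - 1 := by ring
  rw [this, spow]
  field_simp

lemma spow_mul_self {s : ℝ} (x : ℝ) : 0 ≤ spow s x * x := by
  rw [spow, mul_assoc]
  exact mul_nonneg (Real.rpow_nonneg (abs_nonneg x) _) (mul_self_nonneg x)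

lemma spow_mul_abs_le {s : ℝ} (hs : 0 < s) (x : ℝ) : spow s x * |x| ≤ |x| ^ (s + 1) := by
  rcases eq_or_ne x 0 with rfl | h
  · simp [Real.zero_rpow (by linarith : s + 1 ≠ 0)]
  · rw [Real.rpow_add_one (abs_pos.2 h).ne', ← abs_spow hs]
    exact mul_le_mul_of_nonneg_right (le_abs_self _) (abs_nonneg x)

/-- Truncation of `x` to `[-M, M]`. -/
noncomputable def clamp (M x : ℝ) : ℝ := max (-M) (min x M)

lemma abs_clamp_le {M : ℝ} (hM : 0 ≤ M) (x : ℝ) : |clamp M x| ≤ M :=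
  abs_le.2 ⟨le_max_left _ _, max_le (by linarith) (min_le_right _ _)⟩

lemma clamp_of_abs_le {M x : ℝ} (h : |x| ≤ M) : clamp M x = x := by
  rw [abs_le] at h
  rw [clamp, min_eq_left h.2, max_eq_right h.1]

lemma clamp_lip (M x y : ℝ) : |clamp M x - clamp M y| ≤ |x - y| := by
  have h1 := abs_max_sub_max_le_max (-M) (min x M) (-M) (min y M)
  have h2 := abs_min_sub_min_le_max x M y M
  simp only [sub_self, abs_zero] at h1 h2
  rw [max_eq_right (abs_nonneg (min x M - min y M))] at h1
  rw [max_eq_left (abs_nonneg (x - y))] at h2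
  exact h1.trans h2

/-! ### Gronwall and energy estimates -/

/-- A differential inequality `D' ≤ C D` on the open interval gives the Gronwall bound, with no
differentiability required at the endpoints. -/
lemma gronwall {D D' : ℝ → ℝ} {C R : ℝ} (hc : ContinuousOn D (Icc 0 R))
    (hD : ∀ r ∈ Ioo 0 R, HasDerivAt D (D' r) r) (hle : ∀ r ∈ Ioo 0 R, D' r ≤ C * D r)
    (hR : 0 ≤ R) : D R ≤ D 0 * Real.exp (C * R) := by
  have hd : ∀ r ∈ Ioo 0 R, HasDerivAt (fun r => D r * Real.exp (-C * r))
      ((D' r - C * D r) * Real.exp (-C * r)) r := by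
    intro r hr
    have h1 : HasDerivAt (fun r : ℝ => Real.exp (-C * r)) (Real.exp (-C * r) * (-C)) r := by
      simpa using ((hasDerivAt_id r).const_mul (-C)).exp
    exact ((hD r hr).mul h1).congr_deriv (by ring)
  have h : AntitoneOn (fun r => D r * Real.exp (-C * r)) (Icc 0 R) := by
    refine antitoneOn_of_deriv_nonpos (convex_Icc 0 R)
      (hc.mul (Continuous.continuousOn (by fun_prop))) ?_ ?_
    · intro r hr
      rw [interior_Icc] at hr
      exact (hd r hr).differentiableAt.differentiableWithinAt
    · intro r hr
      rw [interior_Icc] at hr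
      rw [(hd r hr).deriv]
      exact mul_nonpos_of_nonpos_of_nonneg (by linarith [hle r hr]) (Real.exp_pos _).le
  have h1 := h (left_mem_Icc.2 hR) (right_mem_Icc.2 hR) hR
  simp only [mul_zero, Real.exp_zero, mul_one] at h1
  calc D R = D R * Real.exp (-C * R) * Real.exp (C * R) := by
        rw [mul_assoc, ← Real.exp_add]; simp
    _ ≤ _ := mul_le_mul_of_nonneg_right h1 (Real.exp_pos _).le

/-- Along a trajectory of `f' = |G|^{s-1} G`, `G' = |G| - f - c(r) G` with `c ≥ 0`, the energy
`|G|^{s+1}/(s+1) + f²/2` grows at most like `e^{(s+1) r}`. -/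
lemma energy_bound {s R : ℝ} (hs : 1 < s) (hR : 0 ≤ R) {f G c : ℝ → ℝ}
    (hfc : ContinuousOn f (Icc 0 R)) (hGc : ContinuousOn G (Icc 0 R))
    (hf : ∀ r ∈ Ioo 0 R, HasDerivAt f (spow s (G r)) r)
    (hG : ∀ r ∈ Ioo 0 R, HasDerivAt G (|G r| - f r - c r * G r) r)
    (hcn : ∀ r ∈ Ioo 0 R, 0 ≤ c r) (hG0 : G 0 = 0) :
    |G R| ^ (s + 1) / (s + 1) ≤ f 0 ^ 2 / 2 * Real.exp ((s + 1) * R) := by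
  have hs1 : 0 < s + 1 := by linarith
  have key := gronwall (C := s + 1) (R := R)
    (D := fun r => |G r| ^ (s + 1) / (s + 1) + f r ^ 2 / 2)
    (D' := fun r => spow s (G r) * (|G r| - f r - c r * G r) + f r * spow s (G r))
    (((hGc.abs.rpow_const fun _ _ => Or.inr hs1.le).div_const _).add
      ((hfc.pow 2).div_const 2)) ?_ ?_ hR
  · simp only [hG0, abs_zero, Real.zero_rpow hs1.ne', zero_div, zero_add] at key
    linarith [sq_nonneg (f R)]
  · intro r hr
    have h1 := (hasDerivAt_energy hs (G r)).comp r (hG r hr)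
    have h2 := ((hf r hr).pow 2).div_const 2
    exact (h1.add h2).congr_deriv (by simp; ring)
  · intro r hr
    have e1 := spow_mul_abs_le (by linarith : 0 < s) (G r)
    have e2 := mul_nonneg (hcn r hr) (spow_mul_self (s := s) (G r))
    have e3 : (s + 1) * (|G r| ^ (s + 1) / (s + 1) + f r ^ 2 / 2) =
      |G r| ^ (s + 1) + (s + 1) * (f r ^ 2 / 2) := by field_simp
    have e4 : 0 ≤ (s + 1) * (f r ^ 2 / 2) := by positivity
    rw [e3]
    nlinarith

/-! ### Existence and uniqueness for the first-order system -/

/-- Global existence for the first-order system in the unknowns `f` and `G = |f'|^{p-2} f'`,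
with `s = 1 / (p - 1)`. -/
lemma system_exists (k : ℕ) (a s : ℝ) (hs : 1 < s) :
    ∃ f G A : ℝ → ℝ, Continuous G ∧ Continuous A ∧ f 0 = a ∧ G 0 = 0 ∧
      (∀ r, 0 ≤ r → HasDerivAt f (spow s (G r)) r) ∧
      (∀ r, 0 ≤ r → HasDerivWithinAt G (|G r| - f r - k * A r) (Ici 0) r) ∧
      ∀ r, 0 ≤ r → G r = r * A r := by
  have hs1 : 0 < s + 1 := by linarith
  -- `c` is chosen so that `c ^ (s + 1)` exceeds `(s + 1)` times the initial energy `a² / 2`;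
  -- by the energy estimate the threshold `M r = c e^r` is then never reached.
  set c : ℝ := 1 + (s + 1) * (a ^ 2 / 2) with hc
  have hc1 : 1 ≤ c := by
    have : 0 ≤ (s + 1) * (a ^ 2 / 2) := by positivity
    linarith
  have hc0 : 0 < c := by linarith
  set M : ℝ → ℝ := fun r => c * Real.exp r with hM
  have hMp : ∀ r, 0 < M r := fun r => mul_pos hc0 (Real.exp_pos r)
  have hMc : Continuous M := by fun_prop
  set ψ : ℝ → ℝ → ℝ := fun t x => spow s (clamp (M t) x) with hψdef
  have hψ : Continuous (fun x : ℝ × ℝ => ψ x.1 x.2) := by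
    refine (spow_continuous (by linarith : 0 < s)).comp ?_
    unfold clamp
    fun_prop
  obtain ⟨G, hGc, hG⟩ := volterra_exists k a ψ hψ
    (fun t => by
      simp only [hψdef]
      rw [clamp_of_abs_le (by simpa using (hMp t).le), spow_zero])
    (fun t => 2 * s * M t ^ (s - 1))
    (fun t => mul_nonneg (by linarith) (Real.rpow_nonneg (hMp t).le _))
    (continuous_const.mul (hMc.rpow_const fun t => Or.inl (hMp t).ne'))
    (fun t x y => (spow_lip hs.le (abs_clamp_le (hMp t).le x) (abs_clamp_le (hMp t).le y)).trans
      (mul_le_mul_of_nonneg_left (clamp_lip _ _ _)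
        (mul_nonneg (by linarith) (Real.rpow_nonneg (hMp t).le _))))
  have hψG : Continuous (fun t => ψ t (G t)) := hψ.comp (continuous_id.prodMk hGc)
  set f : ℝ → ℝ := fun r => a + ∫ t in (0:ℝ)..r, ψ t (G t) with hf
  have hfd : ∀ r, HasDerivAt f (ψ r (G r)) r := fun r =>
    (hψG.integral_hasStrictDerivAt 0 r).hasDerivAt.const_add a
  have hfc : Continuous f := continuous_iff_continuousAt.2 fun r => (hfd r).continuousAt
  have hf0 : f 0 = a := by simp [hf]
  have hG0 : G 0 = 0 := by simpa using hG 0 le_rfl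
  have hFc : Continuous (fun r => |G r| - f r) := hGc.abs.sub hfc
  have hGd : ∀ r, 0 ≤ r → HasDerivWithinAt G
      (|G r| - f r - k * avg k (fun r => |G r| - f r) r) (Ici 0) r := fun r hr =>
    (avg_deriv k hFc hr).congr (fun x hx => hG x hx) (hG r hr)
  have hGlt : ∀ r, 0 ≤ r → |G r| < M r := by
    by_contra hcon
    push Not at hcon
    set S : Set ℝ := {r | 0 ≤ r ∧ M r ≤ |G r|} with hS
    have hScl : IsClosed S :=
      (isClosed_le continuous_const continuous_id).inter (isClosed_le hMc hGc.abs)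
    have hSb : BddBelow S := ⟨0, fun x hx => hx.1⟩
    have hR := hScl.csInf_mem hcon hSb
    set R := sInf S
    have hlt : ∀ r ∈ Ioo 0 R, |G r| < M r := by
      intro r hr
      by_contra h
      push Not at h
      exact absurd (csInf_le hSb ⟨hr.1.le, h⟩) (not_le.2 hr.2)
    have he := energy_bound (c := fun r => k / r) hs hR.1 hfc.continuousOn hGc.continuousOn
      (fun r hr => by
        have h := hfd r
        simp only [hψdef] at h
        rwa [clamp_of_abs_le (hlt r hr).le] at h)
      (fun r hr => by
        have h := (hGd r hr.1.le).hasDerivAt (Ici_mem_nhds hr.1)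
        refine h.congr_deriv ?_
        have h2 : k / r * G r = k * avg k (fun r => |G r| - f r) r := by
          rw [hG r hr.1.le]
          have := hr.1.ne'
          field_simp
          rfl
        rw [h2])
      (fun r hr => div_nonneg (Nat.cast_nonneg k) hr.1.le) hG0
    rw [hf0] at he
    have h1 : M R ^ (s + 1) ≤ |G R| ^ (s + 1) := Real.rpow_le_rpow (hMp R).le hR.2 hs1.le
    have h2 : M R ^ (s + 1) = c ^ (s + 1) * Real.exp ((s + 1) * R) := by
      rw [hM, Real.mul_rpow hc0.le (Real.exp_pos _).le, ← Real.exp_mul, mul_comm R]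
    have h3 : c ≤ c ^ (s + 1) := by
      conv_lhs => rw [← Real.rpow_one c]
      exact Real.rpow_le_rpow_of_exponent_le hc1 (by linarith)
    have h4 := Real.exp_pos ((s + 1) * R)
    rw [div_le_iff₀ hs1] at he
    have h5 : c * Real.exp ((s + 1) * R) ≤ c ^ (s + 1) * Real.exp ((s + 1) * R) :=
      mul_le_mul_of_nonneg_right h3 h4.le
    have h6 : c * Real.exp ((s + 1) * R) = Real.exp ((s + 1) * R) +
        a ^ 2 / 2 * Real.exp ((s + 1) * R) * (s + 1) := by
      rw [hc]; ring
    linarith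
  refine ⟨f, G, avg k (fun r => |G r| - f r), hGc, avg_continuous k hFc, hf0, hG0,
    fun r hr => ?_, hGd, hG⟩
  have h := hfd r
  simp only [hψdef] at h
  rwa [clamp_of_abs_le (hGlt r hr).le] at h

/-- Uniqueness for the first-order system. The singular damping term only decreases
`(G₁ - G₂)² + (f₁ - f₂)²`, and the remaining terms are locally Lipschitz. -/
lemma system_unique {s : ℝ} (hs : 1 < s) {c f₁ G₁ f₂ G₂ : ℝ → ℝ}
    (hcn : ∀ r, 0 < r → 0 ≤ c r)
    (hf₁c : ContinuousOn f₁ (Ici 0)) (hG₁c : ContinuousOn G₁ (Ici 0))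
    (hf₂c : ContinuousOn f₂ (Ici 0)) (hG₂c : ContinuousOn G₂ (Ici 0))
    (hf₁ : ∀ r, 0 < r → HasDerivAt f₁ (spow s (G₁ r)) r)
    (hf₂ : ∀ r, 0 < r → HasDerivAt f₂ (spow s (G₂ r)) r)
    (hG₁ : ∀ r, 0 < r → HasDerivAt G₁ (|G₁ r| - f₁ r - c r * G₁ r) r)
    (hG₂ : ∀ r, 0 < r → HasDerivAt G₂ (|G₂ r| - f₂ r - c r * G₂ r) r)
    (hf0 : f₁ 0 = f₂ 0) (hG0 : G₁ 0 = G₂ 0) (R : ℝ) (hR : 0 ≤ R) : f₁ R = f₂ R := by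
  have hsub : Icc 0 R ⊆ Ici (0:ℝ) := Icc_subset_Ici_self
  obtain ⟨M₁, hM₁⟩ := isCompact_Icc.exists_bound_of_continuousOn (hG₁c.mono hsub)
  obtain ⟨M₂, hM₂⟩ := isCompact_Icc.exists_bound_of_continuousOn (hG₂c.mono hsub)
  set M := max M₁ M₂
  set L := 2 * s * M ^ (s - 1) with hL
  have hM0 : 0 ≤ M := (norm_nonneg _).trans ((hM₁ 0 (left_mem_Icc.2 hR)).trans (le_max_left _ _))
  have hL0 : 0 ≤ L := mul_nonneg (by linarith) (Real.rpow_nonneg hM0 _)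
  have key := gronwall (C := 3 + L) (R := R)
    (D := fun r => (G₁ r - G₂ r) ^ 2 + (f₁ r - f₂ r) ^ 2)
    (D' := fun r => 2 * (G₁ r - G₂ r) *
        ((|G₁ r| - f₁ r - c r * G₁ r) - (|G₂ r| - f₂ r - c r * G₂ r)) +
      2 * (f₁ r - f₂ r) * (spow s (G₁ r) - spow s (G₂ r)))
    ((((hG₁c.sub hG₂c).pow 2).add ((hf₁c.sub hf₂c).pow 2)).mono hsub) ?_ ?_ hR
  · simp only [hf0, hG0, sub_self] at key
    have : (f₁ R - f₂ R) ^ 2 = 0 := by nlinarith [sq_nonneg (f₁ R - f₂ R), sq_nonneg (G₁ R - G₂ R)]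
    exact sub_eq_zero.1 (pow_eq_zero_iff two_ne_zero |>.1 this)
  · intro r hr
    exact ((((hG₁ r hr.1).sub (hG₂ r hr.1)).pow 2).add
      (((hf₁ r hr.1).sub (hf₂ r hr.1)).pow 2)).congr_deriv (by simp)
  · intro r hr
    have hr' : r ∈ Icc 0 R := Ioo_subset_Icc_self hr
    have e1 := spow_lip hs.le ((hM₁ r hr').trans (le_max_left M₁ M₂))
      ((hM₂ r hr').trans (le_max_right M₁ M₂))
    have e2 := abs_abs_sub_abs_le_abs_sub (G₁ r) (G₂ r)
    have e3 := mul_nonneg (hcn r hr.1) (sq_nonneg (G₁ r - G₂ r))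
    rw [← Real.norm_eq_abs (G₁ r - G₂ r)] at e1
    change _ ≤ L * _ at e1
    generalize hg : G₁ r - G₂ r = g at *
    generalize hh : f₁ r - f₂ r = h at *
    generalize hu : spow s (G₁ r) - spow s (G₂ r) = u at *
    generalize hv : |G₁ r| - |G₂ r| = v at *
    have e4 : |G₁ r| - f₁ r - c r * G₁ r - (|G₂ r| - f₂ r - c r * G₂ r) = v - h - c r * g := by
      rw [← hg, ← hh, ← hv]; ring
    rw [e4]
    rw [Real.norm_eq_abs] at e1
    have b1 : g * v ≤ g ^ 2 := by
      calc g * v ≤ |g * v| := le_abs_self _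
        _ = |g| * |v| := abs_mul _ _
        _ ≤ |g| * |g| := mul_le_mul_of_nonneg_left e2 (abs_nonneg _)
        _ = g ^ 2 := by rw [abs_mul_abs_self]; ring
    have b2 : h * u ≤ L * (|h| * |g|) := by
      calc h * u ≤ |h * u| := le_abs_self _
        _ = |h| * |u| := abs_mul _ _
        _ ≤ |h| * (L * |g|) := mul_le_mul_of_nonneg_left e1 (abs_nonneg _)
        _ = _ := by ring
    have b3 : 2 * (|h| * |g|) ≤ g ^ 2 + h ^ 2 := by
      nlinarith [sq_nonneg (|h| - |g|), sq_abs h, sq_abs g]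
    have b4 := mul_le_mul_of_nonneg_left b3 hL0
    nlinarith [sq_nonneg (g + h)]

/-- existence and uniqueness of the solution to the profile equation. -/
theorem stmt0 (N : ℕ) (hN : 2 ≤ N) (p : ℝ)
    (hp1 : 2 * (N : ℝ) / ((N : ℝ) + 1) < p) (hp2 : p < 2)
    (a : ℝ) (ha : 0 < a) :
    (∃ f f' F' : ℝ → ℝ, IsProfileSol N p a f f' F') ∧
    (∀ f₁ f₁' F₁' f₂ f₂' F₂' : ℝ → ℝ,
      IsProfileSol N p a f₁ f₁' F₁' → IsProfileSol N p a f₂ f₂' F₂' →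
      ∀ r, 0 ≤ r → f₁ r = f₂ r) := by
  have hN1 : (1:ℝ) ≤ N := by exact_mod_cast (by omega : 1 ≤ N)
  have hp : 1 < p := by
    refine lt_of_le_of_lt ?_ hp1
    rw [le_div_iff₀ (by linarith)]
    linarith
  have hp0 : 0 < p - 1 := by linarith
  set s : ℝ := 1 / (p - 1) with hs_def
  have hs : 1 < s := by
    rw [hs_def, lt_div_iff₀ hp0]
    linarith
  have hsp : s * (p - 1) = 1 := by rw [hs_def]; field_simp
  have hspow : ∀ y : ℝ, |y| ^ (p - 2) * y = spow (p - 1) y := fun y => by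
    rw [spow]
    congr 2
    ring
  constructor
  · obtain ⟨f, G, A, hGc, hAc, hf0, hG0, hf, hG, hGA⟩ := system_exists (N - 1) a s hs
    have hk : ((N - 1 : ℕ) : ℝ) = N - 1 := by
      rw [Nat.cast_sub (by omega)]; simp
    refine ⟨f, fun r => spow s (G r), fun r => |G r| - f r - (N - 1 : ℕ) * A r,
      fun r hr => (hf r hr).hasDerivWithinAt,
      ((spow_continuous (by linarith)).comp hGc).continuousOn, ?_, ?_, ?_, hf0, ?_⟩
    · intro r hr
      have h : (fun r => |spow s (G r)| ^ (p - 2) * spow s (G r)) = G := by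
        funext x
        rw [hspow, spow_spow (by linarith) hsp]
      rw [h]
      exact hG r hr
    · have hfc : ContinuousOn f (Ici 0) := fun r hr => (hf r hr).continuousAt.continuousWithinAt
      exact (hGc.abs.continuousOn.sub hfc).sub (continuous_const.mul hAc).continuousOn
    · intro r hr
      have h : ((N : ℝ) - 1) / r * G r = (N - 1) * A r := by
        rw [hGA r hr.le]
        field_simp
      rw [hspow, spow_spow (by linarith) hsp, ← abs_spow hp0, spow_spow (by linarith) hsp, h, hk]
      ring
    · simp only [hG0, spow_zero]
  · intro f₁ f₁' F₁' f₂ f₂' F₂' h₁ h₂ r hr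
    have hf : ∀ f f' F' : ℝ → ℝ, IsProfileSol N p a f f' F' → ∀ r, 0 < r →
        HasDerivAt f (spow s (|f' r| ^ (p - 2) * f' r)) r := by
      intro f f' F' h r hr
      rw [hspow, spow_spow hp0 (by rw [mul_comm]; exact hsp)]
      exact (h.1 r hr.le).hasDerivAt (Ici_mem_nhds hr)
    have hG : ∀ f f' F' : ℝ → ℝ, IsProfileSol N p a f f' F' → ∀ r, 0 < r →
        HasDerivAt (fun s => |f' s| ^ (p - 2) * f' s)
          (|(|f' r| ^ (p - 2) * f' r)| - f r - ((N : ℝ) - 1) / r * (|f' r| ^ (p - 2) * f' r))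
          r := by
      intro f f' F' h r hr
      refine ((h.2.2.1 r hr.le).hasDerivAt (Ici_mem_nhds hr)).congr_deriv ?_
      have e := h.2.2.2.2.1 r hr
      have e2 : |(|f' r| ^ (p - 2) * f' r)| = |f' r| ^ (p - 1) := by
        rw [hspow, abs_spow hp0]
      rw [e2]
      linarith
    refine system_unique (c := fun r => ((N : ℝ) - 1) / r) hs
      (fun r hr => div_nonneg (by linarith) hr.le)
      (fun r hr => (h₁.1 r hr).continuousWithinAt)
      (fun r hr => (h₁.2.2.1 r hr).continuousWithinAt)
      (fun r hr => (h₂.1 r hr).continuousWithinAt)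
      (fun r hr => (h₂.2.2.1 r hr).continuousWithinAt)
      (hf _ _ _ h₁) (hf _ _ _ h₂) (hG _ _ _ h₁) (hG _ _ _ h₂) ?_ ?_ r hr
    · rw [h₁.2.2.2.2.2.1, h₂.2.2.2.2.2.1]
    · simp [h₁.2.2.2.2.2.2, h₂.2.2.2.2.2.2]
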